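/- Let n ∈ ℕ, let L be a symmetric real n×n matrix such that N := Id + L is positive definite, let η ∈ ℝⁿ with η ≠ 0, let f ∈ ℝⁿ and y ∈ ℝ. Then (1/(2π)) ∫_ℝ ∫_{ℝⁿ} exp(iλ(⟨η, x⟩ − y)) · exp(i⟨f, x⟩) · exp(−(1/2)⟨x, L x⟩) dγⁿ(x) dλ = (2π⟨η, N⁻¹η⟩)^{−1/2} · det(N)^{−1/2} · exp(−(1/2)⟨f, N⁻¹ f⟩) · exp(−(i⟨η, N⁻¹ f⟩ − y)²/(2⟨η, N⁻¹η⟩)), where all integrals are complex-valued, ⟨η, N⁻¹η⟩ > 0 since N is positive definite, and the square (i⟨η,N⁻¹f⟩ − y)² is taken in ℂ. -/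

import Mathlib

open Matrix MeasureTheory ProbabilityTheory

theorem aux_pi_density (n : ℕ) :
    (Measure.pi fun _ : Fin n => gaussianReal 0 1) =
      (volume : Measure (Fin n → ℝ)).withDensity
        (fun x => ENNReal.ofReal (∏ i, gaussianPDFReal 0 1 (x i))) := by
  refine Measure.pi_eq fun s hs => ?_
  rw [withDensity_apply _ (MeasurableSet.univ_pi hs), volume_pi, Measure.restrict_pi_pi,
    ← ofReal_integral_eq_lintegral_ofReal]
  · rw [integral_fintype_prod_eq_prod (f := fun _ : Fin n => gaussianPDFReal 0 1),
      ENNReal.ofReal_prod_of_nonneg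
        (fun i _ => integral_nonneg (fun x => gaussianPDFReal_nonneg _ _ _))]
    refine Finset.prod_congr rfl fun i _ => ?_
    rw [gaussianReal_apply_eq_integral _ one_ne_zero]
  · exact Integrable.fintype_prod (f := fun _ : Fin n => gaussianPDFReal 0 1)
      (fun i => (integrable_gaussianPDFReal 0 1).restrict)
  · exact Filter.Eventually.of_forall
      fun x => Finset.prod_nonneg fun i _ => gaussianPDFReal_nonneg _ _ _

theorem aux_pi_integral (n : ℕ) (g : (Fin n → ℝ) → ℂ) :
    ∫ x, g x ∂(Measure.pi fun _ : Fin n => gaussianReal 0 1) =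
      ((((√(2 * Real.pi))⁻¹) ^ n : ℝ) : ℂ) *
        ∫ x : Fin n → ℝ, Complex.exp (-(1 / 2 : ℂ) * ((x ⬝ᵥ x : ℝ) : ℂ)) * g x := by
  rw [aux_pi_density, integral_withDensity_eq_integral_toReal_smul]
  · rw [← integral_const_mul]
    congr 1
    ext x
    rw [ENNReal.toReal_ofReal (Finset.prod_nonneg fun i _ => gaussianPDFReal_nonneg _ _ _)]
    have : ∏ i, gaussianPDFReal 0 1 (x i)
        = ((√(2 * Real.pi))⁻¹) ^ n * Real.exp (-(1 / 2) * (x ⬝ᵥ x)) := by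
      simp only [gaussianPDFReal, Finset.prod_mul_distrib, ← Real.exp_sum]
      congr 1
      · simp
      · congr 1
        rw [dotProduct, Finset.mul_sum]
        refine Finset.sum_congr rfl fun i _ => ?_
        simp
        ring
    rw [this, Complex.real_smul]
    push_cast
    ring
  · refine ENNReal.measurable_ofReal.comp ?_
    exact Finset.measurable_prod _ fun i _ =>
      (measurable_gaussianPDFReal 0 1).comp (measurable_pi_apply i)
  · exact Filter.Eventually.of_forall fun x => ENNReal.ofReal_lt_top

theorem aux_gauss_std (n : ℕ) (c : Fin n → ℝ) :
    ∫ u : Fin n → ℝ, Complex.exp (-(1 / 2 : ℂ) * ((u ⬝ᵥ u : ℝ) : ℂ)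
        + Complex.I * ((c ⬝ᵥ u : ℝ) : ℂ)) =
      (((√(2 * Real.pi)) ^ n : ℝ) : ℂ) * Complex.exp (-(1 / 2 : ℂ) * ((c ⬝ᵥ c : ℝ) : ℂ)) := by
  have h := GaussianFourier.integral_cexp_neg_mul_sum_add (b := (1 / 2 : ℂ)) (by norm_num)
    (fun i => Complex.I * (c i : ℂ))
  convert! h using 1
  · congr 1
    ext u
    congr 2
    · simp [dotProduct, pow_two]
    · simp [dotProduct, Finset.mul_sum, mul_assoc]
  · congr 1
    · rw [Real.sqrt_eq_rpow, ← Real.rpow_natCast, ← Real.rpow_mul (by positivity)]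
      rw [Complex.ofReal_cpow (by positivity)]
      congr 1
      · push_cast; ring
      · simp; ring
    · congr 1
      simp only [dotProduct, mul_pow, Complex.I_sq]
      push_cast
      rw [Finset.mul_sum, Finset.sum_div]
      refine Finset.sum_congr rfl fun i _ => ?_
      ring

theorem aux_gauss (n : ℕ) (N : Matrix (Fin n) (Fin n) ℝ) (hpos : N.PosDef) (w : Fin n → ℝ) :
    ∫ x : Fin n → ℝ, Complex.exp (-(1 / 2 : ℂ) * ((x ⬝ᵥ N.mulVec x : ℝ) : ℂ)
        + Complex.I * ((w ⬝ᵥ x : ℝ) : ℂ)) =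
      (((√(2 * Real.pi)) ^ n : ℝ) : ℂ) * ((N.det ^ (-(1 : ℝ) / 2) : ℝ) : ℂ) *
        Complex.exp (-(1 / 2 : ℂ) * ((w ⬝ᵥ N⁻¹.mulVec w : ℝ) : ℂ)) := by
  obtain ⟨B, hB⟩ : ∃ B : Matrix (Fin n) (Fin n) ℝ, N = Bᵀ * B := by
    open scoped MatrixOrder Matrix.Norms.L2Operator in
    obtain ⟨B, hB⟩ := CStarAlgebra.nonneg_iff_eq_star_mul_self.mp hpos.posSemidef.nonneg
    exact ⟨B, by simpa [star_eq_conjTranspose] using hB⟩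
  have hdet : N.det = B.det ^ 2 := by rw [hB, det_mul, det_transpose, sq]
  have hBd : B.det ≠ 0 := by
    intro h
    have := hpos.det_pos
    rw [hdet, h] at this
    norm_num at this
  have hBu : IsUnit B.det := isUnit_iff_ne_zero.mpr hBd
  set c : Fin n → ℝ := (B⁻¹)ᵀ.mulVec w with hc
  have hcw : ∀ x, c ⬝ᵥ B.mulVec x = w ⬝ᵥ x := by
    intro x
    rw [hc, mulVec_transpose, ← dotProduct_mulVec, mulVec_mulVec, nonsing_inv_mul _ hBu,
      one_mulVec]
  have hcc : c ⬝ᵥ c = w ⬝ᵥ N⁻¹.mulVec w := by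
    rw [hB, Matrix.mul_inv_rev, ← mulVec_mulVec, dotProduct_mulVec, hc, ← transpose_nonsing_inv,
      ← mulVec_transpose, transpose_transpose, dotProduct_comm]
  have hxx : ∀ x, (B.mulVec x) ⬝ᵥ (B.mulVec x) = x ⬝ᵥ N.mulVec x := by
    intro x
    rw [hB, ← mulVec_mulVec, dotProduct_mulVec x, vecMul_transpose]
  have hmap := Real.map_matrix_volume_pi_eq_smul_volume_pi hBd
  have key := congrArg (fun μ : Measure (Fin n → ℝ) =>
    ∫ u, Complex.exp (-(1 / 2 : ℂ) * ((u ⬝ᵥ u : ℝ) : ℂ)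
        + Complex.I * ((c ⬝ᵥ u : ℝ) : ℂ)) ∂μ) hmap
  have hcont : Continuous fun u : Fin n → ℝ => Complex.exp (-(1 / 2 : ℂ) * ((u ⬝ᵥ u : ℝ) : ℂ)
        + Complex.I * ((c ⬝ᵥ u : ℝ) : ℂ)) := by
    simp only [dotProduct]
    fun_prop
  rw [integral_map (LinearMap.continuous_of_finiteDimensional _).aemeasurable
    hcont.aestronglyMeasurable, integral_smul_measure, aux_gauss_std, hcc] at key
  simp only [toLin'_apply, hcw, hxx] at key
  rw [key, hdet, ENNReal.toReal_ofReal (abs_nonneg _), Complex.real_smul]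
  have : (B.det ^ 2) ^ (-(1 : ℝ) / 2) = |(B.det)⁻¹| := by
    rw [← sq_abs, ← Real.rpow_natCast, ← Real.rpow_mul (abs_nonneg _), abs_inv]
    norm_num
    rw [Real.rpow_neg_one]
  rw [this]
  ring

/-- Finite-dimensional version of the T-transform of `exp(-(1/2)⟨·,L·⟩)·δ₀(⟨η,·⟩-y)`:
for a symmetric `L` with `N = Id + L` positive definite, `η ≠ 0`, `f ∈ ℝⁿ`, `y ∈ ℝ`,
`(1/2π)∫∫ exp(iλ(⟨η,x⟩-y))·exp(i⟨f,x⟩)·exp(-(1/2)⟨x,Lx⟩) dγⁿ(x) dλ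
 = (2π⟨η,N⁻¹η⟩)^{-1/2}·det(N)^{-1/2}·exp(-(1/2)⟨f,N⁻¹f⟩)·exp(-(i⟨η,N⁻¹f⟩-y)²/(2⟨η,N⁻¹η⟩))`. -/
theorem gauss_kernel_donsker_T_transform
    (n : ℕ) (L : Matrix (Fin n) (Fin n) ℝ) (hsymm : L.IsSymm)
    (N : Matrix (Fin n) (Fin n) ℝ) (hN : N = 1 + L) (hpos : N.PosDef)
    (η : Fin n → ℝ) (hη : η ≠ 0) (f : Fin n → ℝ) (y : ℝ)
    (γ : Measure (Fin n → ℝ)) (hγ : γ = Measure.pi fun _ => gaussianReal 0 1) :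
    (1 / (2 * Real.pi) : ℂ) *
        ∫ l : ℝ, ∫ x : Fin n → ℝ,
            Complex.exp (Complex.I * (l : ℂ) * (((η ⬝ᵥ x : ℝ) : ℂ) - (y : ℂ))) *
              Complex.exp (Complex.I * ((f ⬝ᵥ x : ℝ) : ℂ)) *
              Complex.exp (-(1 / 2 : ℂ) * ((x ⬝ᵥ L.mulVec x : ℝ) : ℂ)) ∂γ =
      (((2 * Real.pi * (η ⬝ᵥ N⁻¹.mulVec η)) ^ (-(1 : ℝ) / 2) : ℝ) : ℂ) *
        ((N.det ^ (-(1 : ℝ) / 2) : ℝ) : ℂ) *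
        Complex.exp (-(1 / 2 : ℂ) * ((f ⬝ᵥ N⁻¹.mulVec f : ℝ) : ℂ)) *
        Complex.exp (-(Complex.I * ((η ⬝ᵥ N⁻¹.mulVec f : ℝ) : ℂ) - (y : ℂ)) ^ 2 /
          (2 * ((η ⬝ᵥ N⁻¹.mulVec η : ℝ) : ℂ))) := by
  have hinner : ∀ l : ℝ, (∫ x : Fin n → ℝ,
            Complex.exp (Complex.I * (l : ℂ) * (((η ⬝ᵥ x : ℝ) : ℂ) - (y : ℂ))) *
              Complex.exp (Complex.I * ((f ⬝ᵥ x : ℝ) : ℂ)) *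
              Complex.exp (-(1 / 2 : ℂ) * ((x ⬝ᵥ L.mulVec x : ℝ) : ℂ)) ∂γ) =
      ((N.det ^ (-(1 : ℝ) / 2) : ℝ) : ℂ) *
        Complex.exp (-((η ⬝ᵥ N⁻¹.mulVec η : ℝ) : ℂ) / 2 * (l : ℂ) ^ 2
          + (-((η ⬝ᵥ N⁻¹.mulVec f : ℝ) : ℂ) - Complex.I * y) * l
          + -(1 / 2 : ℂ) * ((f ⬝ᵥ N⁻¹.mulVec f : ℝ) : ℂ)) := by
    intro l
    rw [hγ, aux_pi_integral]
    have h1 : ∀ x : Fin n → ℝ, Complex.exp (-(1 / 2 : ℂ) * ((x ⬝ᵥ x : ℝ) : ℂ)) *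
          (Complex.exp (Complex.I * (l : ℂ) * (((η ⬝ᵥ x : ℝ) : ℂ) - (y : ℂ))) *
              Complex.exp (Complex.I * ((f ⬝ᵥ x : ℝ) : ℂ)) *
              Complex.exp (-(1 / 2 : ℂ) * ((x ⬝ᵥ L.mulVec x : ℝ) : ℂ))) =
        Complex.exp (-Complex.I * l * y) *
          Complex.exp (-(1 / 2 : ℂ) * ((x ⬝ᵥ N.mulVec x : ℝ) : ℂ)
            + Complex.I * (((f + l • η) ⬝ᵥ x : ℝ) : ℂ)) := by
      intro x
      rw [hN, add_mulVec, one_mulVec, dotProduct_add, add_dotProduct, smul_dotProduct]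
      simp only [← Complex.exp_add]
      congr 1
      push_cast [smul_eq_mul]
      ring
    simp_rw [h1]
    rw [integral_const_mul, aux_gauss n N hpos]
    have hsym : f ⬝ᵥ N⁻¹.mulVec η = η ⬝ᵥ N⁻¹.mulVec f := by
      have hT : (N⁻¹)ᵀ = N⁻¹ := by
        have := hpos.isHermitian.inv
        simpa [IsHermitian] using this
      rw [dotProduct_mulVec, ← mulVec_transpose, hT, dotProduct_comm]
    have hq : (f + l • η) ⬝ᵥ N⁻¹.mulVec (f + l • η) =
        f ⬝ᵥ N⁻¹.mulVec f + 2 * l * (η ⬝ᵥ N⁻¹.mulVec f) + l ^ 2 * (η ⬝ᵥ N⁻¹.mulVec η) := by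
      simp only [mulVec_add, mulVec_smul, dotProduct_add, add_dotProduct, smul_dotProduct,
        dotProduct_smul, smul_eq_mul, hsym]
      ring
    rw [hq]
    have hk : ((((√(2 * Real.pi))⁻¹) ^ n : ℝ) : ℂ) * (((√(2 * Real.pi)) ^ n : ℝ) : ℂ) = 1 := by
      rw [← Complex.ofReal_mul, ← mul_pow, inv_mul_cancel₀ (by positivity)]
      simp
    have hE : Complex.exp (-Complex.I * l * y) * Complex.exp (-(1 / 2 : ℂ) *
        ((f ⬝ᵥ N⁻¹.mulVec f + 2 * l * (η ⬝ᵥ N⁻¹.mulVec f) + l ^ 2 * (η ⬝ᵥ N⁻¹.mulVec η) : ℝ) : ℂ))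
        = Complex.exp (-((η ⬝ᵥ N⁻¹.mulVec η : ℝ) : ℂ) / 2 * (l : ℂ) ^ 2
          + (-((η ⬝ᵥ N⁻¹.mulVec f : ℝ) : ℂ) - Complex.I * y) * l
          + -(1 / 2 : ℂ) * ((f ⬝ᵥ N⁻¹.mulVec f : ℝ) : ℂ)) := by
      rw [← Complex.exp_add]
      congr 1
      push_cast
      ring
    rw [← hE]
    linear_combination (Complex.exp (-Complex.I * l * y) * ((N.det ^ (-(1 : ℝ) / 2) : ℝ) : ℂ) *
      Complex.exp (-(1 / 2 : ℂ) *
        ((f ⬝ᵥ N⁻¹.mulVec f + 2 * l * (η ⬝ᵥ N⁻¹.mulVec f) + l ^ 2 * (η ⬝ᵥ N⁻¹.mulVec η) : ℝ) : ℂ)))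
      * hk
  simp_rw [hinner]
  have ha : 0 < η ⬝ᵥ N⁻¹.mulVec η := by
    simpa using hpos.inv.dotProduct_mulVec_pos hη
  generalize η ⬝ᵥ N⁻¹.mulVec η = a at ha
  generalize η ⬝ᵥ N⁻¹.mulVec f = b
  generalize f ⬝ᵥ N⁻¹.mulVec f = d
  have hac : (a : ℂ) ≠ 0 := by exact_mod_cast ha.ne'
  rw [integral_const_mul, integral_cexp_quadratic (by
    rw [← Complex.ofReal_neg, ← Complex.ofReal_ofNat, ← Complex.ofReal_div, Complex.ofReal_re]
    linarith)]
  have hE : Complex.exp (-(1 / 2 : ℂ) * (d : ℂ) -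
        (-(b : ℂ) - Complex.I * y) ^ 2 / (4 * (-(a : ℂ) / 2))) =
      Complex.exp (-(1 / 2 : ℂ) * (d : ℂ)) *
        Complex.exp (-(Complex.I * (b : ℂ) - (y : ℂ)) ^ 2 / (2 * (a : ℂ))) := by
    rw [← Complex.exp_add]
    congr 1
    field_simp
    ring_nf
    simp only [Complex.I_sq]
    ring
  have hK : (1 / (2 * Real.pi) : ℂ) * ((Real.pi : ℂ) / -(-(a : ℂ) / 2)) ^ (1 / 2 : ℂ) =
      (((2 * Real.pi * a) ^ (-(1 : ℝ) / 2) : ℝ) : ℂ) := by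
    have h1 : ((Real.pi : ℂ) / -(-(a : ℂ) / 2)) = ((2 * Real.pi / a : ℝ) : ℂ) := by
      push_cast
      field_simp
    have h2 : (1 / 2 : ℂ) = ((1 / 2 : ℝ) : ℂ) := by push_cast; rfl
    rw [h1, h2, ← Complex.ofReal_cpow (by positivity)]
    have h3 : (2 * Real.pi * a) ^ (-(1 : ℝ) / 2) =
        1 / (2 * Real.pi) * (2 * Real.pi / a) ^ (1 / 2 : ℝ) := by
      have hp : (0 : ℝ) < 2 * Real.pi := by positivity
      rw [neg_div, Real.rpow_neg (by positivity), ← Real.sqrt_eq_rpow, ← Real.sqrt_eq_rpow,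
        Real.sqrt_mul hp.le, Real.sqrt_div hp.le]
      have := Real.sq_sqrt hp.le
      have hs : 0 < √(2 * Real.pi) := Real.sqrt_pos.mpr hp
      have hs' : 0 < √a := Real.sqrt_pos.mpr ha
      generalize √(2 * Real.pi) = s at *
      rw [← this]
      field_simp
    rw [h3]
    push_cast
    rfl
  rw [hE, ← hK]
  ring
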